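/- Fix an integer k ≥ 2 and a real t ∈ (0,1). For n ≥ 0 define g_n(φ) = B̃_{φ,t,k}^n(φ) and, for n ≥ 1, ĝ_n(φ) = B̃_{φ,t,k+1}(B̃_{φ,t,k}^{n−1}(φ)). For real φ_1 < φ_2 let N_n(φ_1,φ_2) = #{φ ∈ (φ_1, φ_2] : g_n(φ) ∈ π + 2πℤ} and N̂_n(φ_1,φ_2) = #{φ ∈ (φ_1, φ_2] : ĝ_n(φ) ∈ π + 2πℤ}. If every φ ∈ [φ_1, φ_2] is such that (e^{iφ}, t) lies below the φ_e curve, then lim_{n→∞} [ (k−1)/(k^{n+1} − 1) · N_n(φ_1,φ_2) − (k−1)/((k+1)·k^n − 2) · N̂_n(φ_1,φ_2) ] = 0; that is, the rooted and the full Cayley tree have the same limiting distribution of Lee–Yang zeros. -/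

import Mathlib

/-- The Blaschke product `B_{z,t,k}(w) = z·((w + t)/(1 + w·t))^k`. -/
noncomputable def Blaschke (z : ℂ) (t : ℝ) (k : ℕ) (w : ℂ) : ℂ :=
  z * ((w + (t : ℂ)) / (1 + w * (t : ℂ))) ^ k

/-- The root with nonnegative imaginary part of the quadratic
`t·w² + ((k+1)·t² − (k−1))·w + t = 0` (for `t_c ≤ t < 1` the discriminant
`(k+1)²t⁴ − 2(k²+1)t² + (k−1)²` is `≤ 0`, so the root is
`(−b + i·√(−disc))/(2t)` with `b = (k+1)t² − (k−1)`). -/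
noncomputable def wbullet (k : ℕ) (t : ℝ) : ℂ :=
  (-((((k : ℂ)) + 1) * (t : ℂ)^2 - ((k : ℂ) - 1)) +
    Complex.I * ((Real.sqrt (-(((k : ℝ) + 1)^2 * t^4 - 2 * ((k : ℝ)^2 + 1) * t^2 +
      ((k : ℝ) - 1)^2)) : ℝ) : ℂ)) / (2 * (t : ℂ))

/-- The edge angle `φ_e(t) = Arg(w_•(t)·((1 + w_•(t)·t)/(w_•(t) + t))^k)`. -/
noncomputable def phie (k : ℕ) (t : ℝ) : ℝ :=
  (wbullet k t * ((1 + wbullet k t * (t : ℂ)) / (wbullet k t + (t : ℂ))) ^ k).arg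

/-- `(z,t)` lies below the `φ_e` curve: either `0 ≤ t < t_c`, or
`t_c ≤ t < 1` and `φ_e(t) < |Arg z| ≤ π`. -/
def belowCurve (k : ℕ) (t : ℝ) (z : ℂ) : Prop :=
  (0 ≤ t ∧ t < ((k : ℝ) - 1) / ((k : ℝ) + 1)) ∨
  (((k : ℝ) - 1) / ((k : ℝ) + 1) ≤ t ∧ t < 1 ∧ phie k t < |z.arg| ∧ |z.arg| ≤ Real.pi)

/-- The lift of the Blaschke product `B_{e^{iφ},t,k}` to `ℝ`:
`B̃_{φ,t,k}(θ) = k·θ − 2k·arctan(t·sin θ/(1 + t·cos θ)) + φ`. -/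
noncomputable def Blift (φ t : ℝ) (k : ℕ) (θ : ℝ) : ℝ :=
  (k : ℝ) * θ - 2 * (k : ℝ) * Real.arctan (t * Real.sin θ / (1 + t * Real.cos θ)) + φ

/-
Write `h` for the lift of the Möbius factor `w ↦ (w + t)/(1 + w·t)`, so that `B̃_{φ,t,k} = k·h + φ`.
With `r = B̃_{φ,t,k}^{n-1}(φ)`, both phases depend on the same value `h(r)`: the rooted tree has
phase `k·h(r) + φ` and the full tree `(k+1)·h(r) + φ`. Both are continuous and strictly increasing
in `φ`, hence each count is the increment of the phase divided by `2π`, up to an error of at most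
`1`. So the counts `N`, `N̂` satisfy `N̂ = (k+1)/k·N + O(1)`, while `N = O(kⁿ)` because `h` stays
within bounded distance of the identity. The normalising factors `a`, `b` are `O(k⁻ⁿ)` and satisfy
`a - (k+1)/k·b = -a·b/k`, whence `a·N - b·N̂ = -b·(a·N/k + (N̂ - (k+1)/k·N))`, a null sequence
times a bounded one.
-/

open Asymptotics Filter Real Set

/-! ### Counting the solutions of `f x ∈ π + 2πℤ` -/

section Counting

/-- The number of points `x ∈ (a, b]` at which the phase `f` takes a value in `π + 2πℤ`, that is
`exp (i f x) = -1`. For the phases of Cayley trees these are the Lee–Yang zeros in `(a, b]`. -/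
noncomputable def leeYangCount {α : Type*} [Preorder α] (f : α → ℝ) (a b : α) : ℕ :=
  {x ∈ Ioc a b | ∃ m : ℤ, f x = π + 2 * π * m}.ncard

variable {α : Type*} [ConditionallyCompleteLinearOrder α] [TopologicalSpace α] [OrderTopology α]
  [DenselyOrdered α] {a b : α}

lemma ncard_Ioc_exists_eq_intCast {u : α → ℝ} (hab : a ≤ b) (hu : StrictMono u)
    (hc : Continuous u) :
    ({x ∈ Ioc a b | ∃ m : ℤ, u x = m}.ncard : ℤ) = ⌊u b⌋ - ⌊u a⌋ := by
  have image_eq : u '' {x ∈ Ioc a b | ∃ m : ℤ, u x = m} = (↑) '' Ioc ⌊u a⌋ ⌊u b⌋ := by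
    rw [← Int.preimage_Ioc]
    ext y
    constructor
    · rintro ⟨x, ⟨hx, m, hm⟩, rfl⟩
      exact ⟨m, mem_preimage.2 (hm ▸ ⟨hu hx.1, hu.monotone hx.2⟩), hm.symm⟩
    · rintro ⟨m, hm, rfl⟩
      obtain ⟨x, hx, hxm⟩ := intermediate_value_Ioc hab hc.continuousOn hm
      exact ⟨x, ⟨hx, m, hxm⟩, hxm⟩
  rw [← ncard_image_of_injective _ hu.injective, image_eq,
    ncard_image_of_injective _ Int.cast_injective, ← Finset.coe_Ioc, ncard_coe_finset, Int.card_Ioc,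
    Int.toNat_of_nonneg (sub_nonneg.2 (Int.floor_mono (hu.monotone hab)))]

lemma abs_leeYangCount_sub_le_one {f : α → ℝ} (hab : a ≤ b) (hf : StrictMono f)
    (hc : Continuous f) : |leeYangCount f a b - (f b - f a) / (2 * π)| ≤ 1 := by
  let u : α → ℝ := fun x => (f x - π) / (2 * π)
  have hu : StrictMono u := fun x y hxy => by have := hf hxy; simp only [u]; gcongr
  have huc : Continuous u := by fun_prop
  have count_eq : (leeYangCount f a b : ℝ) = ⌊u b⌋ - ⌊u a⌋ := by
    have solution_iff (x : α) (m : ℤ) : f x = π + 2 * π * m ↔ u x = m := by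
      simp only [u]
      rw [div_eq_iff two_pi_pos.ne', sub_eq_iff_eq_add', mul_comm (m : ℝ)]
    simp only [leeYangCount, solution_iff]
    exact_mod_cast ncard_Ioc_exists_eq_intCast hab hu huc
  have increment_eq : (f b - f a) / (2 * π) = u b - u a := by simp only [u]; ring
  rw [count_eq, increment_eq, abs_le]
  constructor <;> linarith [Int.floor_le (u a), Int.floor_le (u b), Int.lt_floor_add_one (u a),
    Int.lt_floor_add_one (u b)]

lemma isBigO_leeYangCount_sub {ι : Type*} {l : Filter ι} {F : ι → α → ℝ} (hab : a ≤ b)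
    (hF : ∀ i, StrictMono (F i)) (hc : ∀ i, Continuous (F i)) :
    (fun i => leeYangCount (F i) a b - (F i b - F i a) / (2 * π)) =O[l] (fun _ => (1 : ℝ)) :=
  .of_bound 1 <| .of_forall fun i => by
    simpa using abs_leeYangCount_sub_le_one hab (hF i) (hc i)

end Counting

/-! ### Sequences of geometric growth -/

lemma isBigO_pow_of_norm_succ_le {E : Type*} [SeminormedAddCommGroup E] {u : ℕ → E} {k c : ℝ}
    (hk : 1 < k) (hu : ∀ n, ‖u (n + 1)‖ ≤ k * ‖u n‖ + c) : u =O[atTop] (k ^ ·) := by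
  have hk₁ : 0 < k - 1 := sub_pos.2 hk
  -- Adding `D` absorbs the constant term: `x ↦ k * x + c` becomes a bound by `x ↦ k * x`.
  let D := |c| / (k - 1)
  have hD : 0 ≤ D := by positivity
  have hcD : c ≤ (k - 1) * D := by
    simpa only [D, mul_div_cancel₀ _ hk₁.ne'] using le_abs_self c
  have shifted_le (n : ℕ) : ‖u n‖ + D ≤ k ^ n * (‖u 0‖ + D) := by
    induction n with
    | zero => simp
    | succ n ih =>
      calc ‖u (n + 1)‖ + D ≤ k * (‖u n‖ + D) := by linarith [hu n]
        _ ≤ k * (k ^ n * (‖u 0‖ + D)) := by gcongr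
        _ = k ^ (n + 1) * (‖u 0‖ + D) := by ring
  refine .of_bound (‖u 0‖ + D) (.of_forall fun n => ?_)
  rw [norm_of_nonneg (by positivity : 0 ≤ k ^ n)]
  linarith [shifted_le n]

lemma isBigO_const_mul_sub_one {ι : Type*} {l : Filter ι} {X : ι → ℝ} {k : ℝ} (hk : 0 < k)
    (hX : Tendsto X l atTop) : X =O[l] (fun i => k * X i - 1) := by
  refine .of_bound (2 / k) ?_
  filter_upwards [hX.eventually_ge_atTop (2 / k)] with i hi
  have hkX : 2 ≤ k * X i := by rwa [div_le_iff₀' hk] at hi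
  have hXi : 0 < X i := (by positivity : 0 < 2 / k).trans_le hi
  rw [norm_of_nonneg hXi.le, norm_of_nonneg (by linarith), div_mul_eq_mul_div, le_div_iff₀ hk]
  linarith

lemma normalized_sub_eq {k X : ℝ} (hk : k ≠ 0) (hP : k * X - 1 ≠ 0) (hQ : (k + 1) * X - 2 ≠ 0)
    (N M : ℝ) :
    (k - 1) / (k * X - 1) * N - (k - 1) / ((k + 1) * X - 2) * M =
      -((k - 1) / ((k + 1) * X - 2) *
        ((k - 1) / k * (N / (k * X - 1)) + (M - (k + 1) / k * N))) := by
  generalize hQ_eq : (k + 1) * X - 2 = Q at *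
  field_simp
  subst hQ_eq
  ring

lemma tendsto_normalized_sub {ι : Type*} {l : Filter ι} {X N M : ι → ℝ} {k : ℝ} (hk : 0 < k)
    (hX : Tendsto X l atTop) (hN : N =O[l] X)
    (hM : (fun i => M i - (k + 1) / k * N i) =O[l] (fun _ => (1 : ℝ))) :
    Tendsto (fun i => (k - 1) / (k * X i - 1) * N i - (k - 1) / ((k + 1) * X i - 2) * M i)
      l (nhds 0) := by
  have hP : Tendsto (fun i => k * X i - 1) l atTop :=
    tendsto_atTop_add_const_right _ (-1) (hX.const_mul_atTop hk)
  have hQ : Tendsto (fun i => (k + 1) * X i - 2) l atTop :=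
    tendsto_atTop_add_const_right _ (-2) (hX.const_mul_atTop (by linarith))
  have bounded : (fun i => (k - 1) / k * (N i / (k * X i - 1)) + (M i - (k + 1) / k * N i))
      =O[l] (fun _ => (1 : ℝ)) := by
    have hNP : (fun i => N i / (k * X i - 1)) =O[l] (fun _ => (1 : ℝ)) :=
      (isBigO_one_iff ℝ).2 <|
        div_isBoundedUnder_of_isBigO (hN.trans (isBigO_const_mul_sub_one hk hX))
    exact (hNP.const_mul_left _).add hM
  have null := (((isLittleO_one_iff ℝ).2 (hQ.const_div_atTop (k - 1))).mul_isBigO bounded).neg_left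
  simp only [mul_one, isLittleO_one_iff] at null
  refine null.congr' ?_
  filter_upwards [hP.eventually_ne_atTop 0, hQ.eventually_ne_atTop 0] with i hPi hQi
  exact (normalized_sub_eq hk.ne' hPi hQi _ _).symm

/-! ### Phases of Cayley trees -/

/-- The phase at the root of the depth-`n` rooted tree with branching number `k`, as a function of
the field angle `φ`, when each edge transforms phases by `h`. The branching number is allowed to be
real. -/
def rootedPhase (h : ℝ → ℝ) (k : ℝ) (n : ℕ) (φ : ℝ) : ℝ :=
  (fun θ => k * h θ + φ)^[n] φ

/-- The phase at a root joined to `d` rooted trees of depth `n` and branching number `k`. It is the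
phase of the rooted tree of depth `n + 1` for `d = k`, and of the full tree for `d = k + 1`. -/
def joinedPhase (h : ℝ → ℝ) (k d : ℝ) (n : ℕ) (φ : ℝ) : ℝ :=
  d * h (rootedPhase h k n φ) + φ

section Phase

variable {h : ℝ → ℝ} {k d : ℝ}

lemma rootedPhase_succ (h : ℝ → ℝ) (k : ℝ) (n : ℕ) :
    rootedPhase h k (n + 1) = joinedPhase h k k n :=
  funext fun _ => Function.iterate_succ_apply' _ _ _

lemma strictMono_rootedPhase (hh : Monotone h) (hk : 0 ≤ k) (n : ℕ) :
    StrictMono (rootedPhase h k n) := by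
  induction n with
  | zero => exact strictMono_id
  | succ n ih =>
    rw [rootedPhase_succ]
    exact ((hh.comp ih.monotone).const_mul hk).add_strictMono strictMono_id

lemma strictMono_joinedPhase (hh : Monotone h) (hk : 0 ≤ k) (hd : 0 ≤ d) (n : ℕ) :
    StrictMono (joinedPhase h k d n) :=
  ((hh.comp (strictMono_rootedPhase hh hk n).monotone).const_mul hd).add_strictMono strictMono_id

lemma continuous_rootedPhase (hh : Continuous h) (k : ℝ) (n : ℕ) :
    Continuous (rootedPhase h k n) := by
  induction n with
  | zero => exact continuous_id
  | succ n ih =>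
    rw [rootedPhase_succ]
    exact ((hh.comp ih).const_mul k).add continuous_id

lemma continuous_joinedPhase (hh : Continuous h) (k d : ℝ) (n : ℕ) :
    Continuous (joinedPhase h k d n) :=
  ((hh.comp (continuous_rootedPhase hh k n)).const_mul d).add continuous_id

lemma isBigO_rootedPhase {C : ℝ} (hC : ∀ θ, |h θ - θ| ≤ C) (hk : 1 < k) (φ : ℝ) :
    (fun n => rootedPhase h k n φ) =O[atTop] (k ^ ·) := by
  refine isBigO_pow_of_norm_succ_le (c := k * C + |φ|) hk fun n => ?_
  rw [rootedPhase_succ]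
  simp only [joinedPhase, norm_eq_abs]
  set r := rootedPhase h k n φ
  have h_le : |h r| ≤ |r| + C := by linarith [abs_sub_abs_le_abs_sub (h r) r, hC r]
  calc |k * h r + φ| ≤ |k * h r| + |φ| := abs_add_le _ _
    _ = k * |h r| + |φ| := by rw [abs_mul, abs_of_pos (by linarith)]
    _ ≤ k * (|r| + C) + |φ| := by gcongr
    _ = k * |r| + (k * C + |φ|) := by ring

variable {a b : ℝ}

lemma isBigO_leeYangCount_rootedPhase {C : ℝ} (hh : Monotone h) (hc : Continuous h)
    (hC : ∀ θ, |h θ - θ| ≤ C) (hk : 1 < k) (hab : a ≤ b) :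
    (fun n => (leeYangCount (rootedPhase h k n) a b : ℝ)) =O[atTop] (k ^ ·) := by
  have one_isBigO : (fun _ => (1 : ℝ)) =O[atTop] fun n : ℕ => k ^ n :=
    .of_bound 1 <| .of_forall fun n => by simpa using one_le_pow₀ (hk.le.trans (le_abs_self k))
  have error := (isBigO_leeYangCount_sub (l := atTop) hab
    (strictMono_rootedPhase hh (zero_le_one.trans hk.le)) (continuous_rootedPhase hc k)).trans
      one_isBigO
  have increment := ((isBigO_rootedPhase hC hk b).sub (isBigO_rootedPhase hC hk a)).const_mul_left
    (2 * π)⁻¹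
  exact (error.add increment).congr_left fun n => by ring

lemma isBigO_leeYangCount_joinedPhase_sub (hh : Monotone h) (hc : Continuous h) (hk : 0 < k)
    (hd : 0 ≤ d) (hab : a ≤ b) :
    (fun n => leeYangCount (joinedPhase h k d n) a b
      - d / k * leeYangCount (rootedPhase h k (n + 1)) a b) =O[atTop] (fun _ => (1 : ℝ)) := by
  have error {e : ℝ} (he : 0 ≤ e) := isBigO_leeYangCount_sub (l := atTop) hab
    (strictMono_joinedPhase hh hk.le he) (continuous_joinedPhase hc k e)
  have constant : (fun _ : ℕ => (1 - d / k) * (b - a) / (2 * π)) =O[atTop] (fun _ => (1 : ℝ)) :=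
    isBigO_const_const _ one_ne_zero _
  refine (((error hd).sub ((error hk.le).const_mul_left (d / k))).add constant).congr_left
    fun n => ?_
  simp only [rootedPhase_succ, joinedPhase]
  field_simp
  ring

theorem tendsto_leeYangCount_rooted_sub_full {C : ℝ} (hh : Monotone h) (hc : Continuous h)
    (hC : ∀ θ, |h θ - θ| ≤ C) (hk : 1 < k) (hab : a ≤ b) :
    Tendsto (fun n : ℕ =>
      (k - 1) / (k ^ (n + 1) - 1) * leeYangCount (rootedPhase h k n) a b
        - (k - 1) / ((k + 1) * k ^ n - 2) * leeYangCount (joinedPhase h k (k + 1) (n - 1)) a b)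
      atTop (nhds 0) := by
  have hk₀ : 0 < k := zero_lt_one.trans hk
  have shift := tendsto_add_atTop_nat 1
  rw [← tendsto_add_atTop_iff_nat 1]
  simp only [pow_succ' k (_ + 1), Nat.add_sub_cancel]
  exact tendsto_normalized_sub hk₀ ((tendsto_pow_atTop_atTop_of_one_lt hk).comp shift)
    ((isBigO_leeYangCount_rootedPhase hh hc hC hk hab).comp_tendsto shift)
    (isBigO_leeYangCount_joinedPhase_sub hh hc hk₀ (by linarith) hab)

end Phase

/-! ### The lift of a Möbius factor -/

/-- For `|t| < 1`, the lift to `ℝ` of the Möbius factor `w ↦ (w + t)/(1 + w·t)` restricted to the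
unit circle. -/
noncomputable def mobiusLift (t θ : ℝ) : ℝ :=
  θ - 2 * arctan (t * sin θ / (1 + t * cos θ))

lemma Blift_eq (φ t : ℝ) (k : ℕ) : Blift φ t k = fun θ => k * mobiusLift t θ + φ := by
  funext θ
  simp only [Blift, mobiusLift]
  ring

lemma abs_mobiusLift_sub_le (t θ : ℝ) : |mobiusLift t θ - θ| ≤ π := by
  rw [mobiusLift, abs_le]
  constructor <;> linarith [neg_pi_div_two_lt_arctan (t * sin θ / (1 + t * cos θ)),
    arctan_lt_pi_div_two (t * sin θ / (1 + t * cos θ))]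

section Mobius

variable {t : ℝ}

lemma one_add_mul_cos_pos (ht : |t| < 1) (θ : ℝ) : 0 < 1 + t * cos θ := by
  have : |t * cos θ| < 1 := by
    rw [abs_mul]
    exact mul_lt_one_of_nonneg_of_lt_one_left (abs_nonneg t) ht (abs_cos_le_one θ)
  linarith [neg_lt_of_abs_lt this]

lemma sq_add_sq_eq_poisson_denom (t θ : ℝ) :
    (1 + t * cos θ) ^ 2 + (t * sin θ) ^ 2 = 1 + 2 * t * cos θ + t ^ 2 := by
  linear_combination t ^ 2 * sin_sq_add_cos_sq θ

lemma poisson_denom_pos (ht : |t| < 1) (θ : ℝ) : 0 < 1 + 2 * t * cos θ + t ^ 2 := by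
  have := one_add_mul_cos_pos ht θ
  rw [← sq_add_sq_eq_poisson_denom]
  positivity

lemma hasDerivAt_mobiusLift (ht : |t| < 1) (θ : ℝ) :
    HasDerivAt (mobiusLift t) ((1 - t ^ 2) / (1 + 2 * t * cos θ + t ^ 2)) θ := by
  have hd := (one_add_mul_cos_pos ht θ).ne'
  have hp := (poisson_denom_pos ht θ).ne'
  have num : HasDerivAt (fun x => t * sin x) (t * cos θ) θ := (hasDerivAt_sin θ).const_mul t
  have den : HasDerivAt (fun x => 1 + t * cos x) (t * -sin θ) θ :=
    ((hasDerivAt_cos θ).const_mul t).const_add 1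
  refine ((hasDerivAt_id θ).fun_sub ((num.fun_div den hd).arctan.const_mul 2)).congr_deriv ?_
  have one_add_sq : 1 + (t * sin θ / (1 + t * cos θ)) ^ 2
      = (1 + 2 * t * cos θ + t ^ 2) / (1 + t * cos θ) ^ 2 := by
    rw [← sq_add_sq_eq_poisson_denom]
    field_simp
  rw [one_add_sq]
  field_simp
  linear_combination (-2 * t ^ 2) * sin_sq_add_cos_sq θ

lemma strictMono_mobiusLift (ht : |t| < 1) : StrictMono (mobiusLift t) :=
  strictMono_of_deriv_pos fun θ => by
    rw [(hasDerivAt_mobiusLift ht θ).deriv]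
    exact div_pos (sub_pos.2 ((sq_lt_one_iff_abs_lt_one t).2 ht)) (poisson_denom_pos ht θ)

lemma continuous_mobiusLift (ht : |t| < 1) : Continuous (mobiusLift t) :=
  continuous_iff_continuousAt.2 fun θ => (hasDerivAt_mobiusLift ht θ).continuousAt

end Mobius

theorem stmt16_general (k : ℕ) (hk : 2 ≤ k) (t : ℝ) (ht : |t| < 1) (φ1 φ2 : ℝ) (hφ12 : φ1 ≤ φ2) :
    Filter.Tendsto (fun n : ℕ =>
        ((k : ℝ) - 1) / ((k : ℝ) ^ (n + 1) - 1) *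
          (({φ ∈ Set.Ioc φ1 φ2 | ∃ m : ℤ,
              (Blift φ t k)^[n] φ = Real.pi + 2 * Real.pi * m}).ncard : ℝ) -
        ((k : ℝ) - 1) / (((k : ℝ) + 1) * (k : ℝ) ^ n - 2) *
          (({φ ∈ Set.Ioc φ1 φ2 | ∃ m : ℤ,
              Blift φ t (k + 1) ((Blift φ t k)^[n - 1] φ) =
                Real.pi + 2 * Real.pi * m}).ncard : ℝ))
      Filter.atTop (nhds 0) := by
  have hk₁ : (1 : ℝ) < k := by exact_mod_cast hk
  simpa only [leeYangCount, rootedPhase, joinedPhase, Blift_eq, Nat.cast_add_one] using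
    tendsto_leeYangCount_rooted_sub_full (strictMono_mobiusLift ht).monotone
      (continuous_mobiusLift ht) (abs_mobiusLift_sub_le t) hk₁ hφ12

theorem stmt16 (k : ℕ) (hk : 2 ≤ k) (t : ℝ) (ht0 : 0 < t) (ht1 : t < 1)
    (φ1 φ2 : ℝ) (hφ12 : φ1 < φ2)
    (hbc : ∀ φ ∈ Set.Icc φ1 φ2, belowCurve k t (Complex.exp ((φ : ℂ) * Complex.I))) :
    Filter.Tendsto (fun n : ℕ =>
        ((k : ℝ) - 1) / ((k : ℝ) ^ (n + 1) - 1) *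
          (({φ ∈ Set.Ioc φ1 φ2 | ∃ m : ℤ,
              (Blift φ t k)^[n] φ = Real.pi + 2 * Real.pi * m}).ncard : ℝ) -
        ((k : ℝ) - 1) / (((k : ℝ) + 1) * (k : ℝ) ^ n - 2) *
          (({φ ∈ Set.Ioc φ1 φ2 | ∃ m : ℤ,
              Blift φ t (k + 1) ((Blift φ t k)^[n - 1] φ) =
                Real.pi + 2 * Real.pi * m}).ncard : ℝ))
      Filter.atTop (nhds 0) :=
  stmt16_general k hk t (abs_lt.2 ⟨by linarith, ht1⟩) φ1 φ2 hφ12.le
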